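/- Let φ be an f-compatible map (positive linear, φ(e) = f) for an effect f in an AOU space. Then φ is coherent (φ(g) = g for all 0 ≤ g ≤ f) if and only if φ ∘ ψ = ψ for every f-compatible map ψ of the form ψ = Σᵢ hᵢ·ωᵢ with hᵢ ∈ V⁺, ωᵢ states, and ψ(e) = f. -/

import Mathlib

/-- An Archimedean order unit (AOU) space structure on a real vector space `V`:
a cone `pos`, an order unit `e`, and the Archimedean property. -/
structure AOU (V : Type*) [AddCommGroup V] [Module ℝ V] where
  pos : Set V
  e : V
  add_mem : ∀ {x y : V}, x ∈ pos → y ∈ pos → x + y ∈ pos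
  smul_mem : ∀ {r : ℝ}, 0 ≤ r → ∀ {x : V}, x ∈ pos → r • x ∈ pos
  pointed : ∀ {x : V}, x ∈ pos → -x ∈ pos → x = 0
  e_mem : e ∈ pos
  order_unit : ∀ x : V, ∃ r : ℝ, 0 ≤ r ∧ r • e + x ∈ pos
  arch : ∀ x : V, (∀ r : ℝ, 0 < r → x + r • e ∈ pos) → x ∈ pos

namespace AOU

variable {V : Type*} [AddCommGroup V] [Module ℝ V] (A : AOU V)

/-- The partial order induced by the cone: `x ≤ y` iff `y - x ∈ pos`. -/
def Le (x y : V) : Prop := y - x ∈ A.pos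

/-- The order norm `‖x‖ = inf {r ≥ 0 : -r e ≤ x ≤ r e}`. -/
noncomputable def onorm (x : V) : ℝ :=
  sInf {r : ℝ | 0 ≤ r ∧ A.Le (-(r • A.e)) x ∧ A.Le x (r • A.e)}

/-- A state is a linear functional with `ω e = 1` that is nonnegative on the cone. -/
def IsState (ω : V →ₗ[ℝ] ℝ) : Prop := ω A.e = 1 ∧ ∀ x ∈ A.pos, 0 ≤ ω x

/-- An effect is an element `f` with `0 ≤ f ≤ e`. -/
def IsEffect (f : V) : Prop := f ∈ A.pos ∧ A.Le f A.e

/-- A positive map sends the cone into itself. -/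
def IsPosMap (φ : V →ₗ[ℝ] V) : Prop := ∀ x ∈ A.pos, φ x ∈ A.pos

/-- A coherent `f`-compatible map (coherent Lüders rule): positive, `φ e = f`,
and `φ g = g` whenever `0 ≤ g ≤ f`. -/
def IsCLR (f : V) (φ : V →ₗ[ℝ] V) : Prop :=
  A.IsPosMap φ ∧ φ A.e = f ∧ ∀ g ∈ A.pos, A.Le g f → φ g = g

end AOU
theorem aou_coherent_iff_absorbs {V : Type*} [AddCommGroup V] [Module ℝ V]
    (A : AOU V)
    (hS : ∃ ω σ : V →ₗ[ℝ] ℝ, A.IsState ω ∧ A.IsState σ ∧ ω ≠ σ)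
    (f : V) (hf : A.IsEffect f)
    (φ : V →ₗ[ℝ] V) (hφ : A.IsPosMap φ) (hφe : φ A.e = f) :
    (∀ g ∈ A.pos, A.Le g f → φ g = g) ↔
      (∀ (n : ℕ) (h : Fin n → V) (ω : Fin n → (V →ₗ[ℝ] ℝ)),
        (∀ i, h i ∈ A.pos) → (∀ i, A.IsState (ω i)) →
        (∑ i, ω i A.e • h i) = f →
        ∀ x : V, φ (∑ i, ω i x • h i) = ∑ i, ω i x • h i) := by
  constructor
  · intro H n h ω hh hω hs x
    have h1 : ∀ i, φ (h i) = h i := by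
      intro i
      apply H _ (hh i)
      have hs' : ∑ j, h j = f := by
        rw [← hs]
        exact Finset.sum_congr rfl fun j _ => by rw [(hω j).1, one_smul]
      have h0 : (0 : V) ∈ A.pos := by
        have := A.smul_mem (le_refl (0 : ℝ)) A.e_mem
        rwa [zero_smul] at this
      have h2 : f - h i = ∑ j ∈ Finset.univ.erase i, h j := by
        rw [← hs', ← Finset.add_sum_erase Finset.univ h (Finset.mem_univ i), add_sub_cancel_left]
      show f - h i ∈ A.pos
      rw [h2]
      exact Finset.sum_induction h (· ∈ A.pos) (fun _ _ => A.add_mem) h0 fun j _ => hh j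
    simp only [map_sum, map_smul, h1]
  · intro H g hg hgf
    obtain ⟨ω, σ, hω, hσ, hne⟩ := hS
    obtain ⟨x, hx⟩ : ∃ x, ω x ≠ σ x := by
      by_contra hc
      push Not at hc
      exact hne (LinearMap.ext hc)
    have key := H 2 ![f - g, g] ![ω, σ]
      (by intro i; fin_cases i; exacts [hgf, hg])
      (by intro i; fin_cases i; exacts [hω, hσ])
      (by simp [Fin.sum_univ_two, hω.1, hσ.1])
    have k1 := key x
    have k2 := key A.e
    simp only [Fin.sum_univ_two, Matrix.cons_val_zero, Matrix.cons_val_one, map_add, map_smul,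
      map_sub, hω.1, hσ.1, one_smul, sub_add_cancel] at k1 k2
    rw [k2] at k1
    have h3 : (σ x - ω x) • (φ g - g) = 0 := by
      rw [← sub_eq_zero] at k1
      rw [← k1]
      module
    rcases smul_eq_zero.1 h3 with h4 | h4
    · exact absurd (sub_eq_zero.1 h4).symm hx
    · exact sub_eq_zero.1 h4
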